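/- The BWBGME algorithm has O(N) remote memory reference complexity in the CC model: there is a constant c such that in every execution, every single invocation (one pass through entry section, critical section and exit section) by any process incurs at most c·N remote memory references. -/

import Mathlib

/-! ## Model of the Black and White Bakery GME (BWBGME) algorithm -/

inductive Color : Type
  | black
  | white
  deriving DecidableEq

/-- The opposite color. -/
def Color.opp : Color → Color
  | .black => .white
  | .white => .black

/-- A token: a session number, a color in {black, white, ⊥} (`none` is ⊥) and a
token number. -/
structure BWTok where
  session : ℕ
  color : Option Color
  number : ℕ
  deriving DecidableEq

def BWTok.init : BWTok := ⟨0, none, 0⟩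

/-- Program counter of a process in the BWBGME algorithm.  The doorway is
`d1 s` (Token[i]:=(s,⊥,0)), `d2 s` (Choosing[i]:=true, line 4),
`d3 s` (mycolor:=GlobalColor, line 5), `scan s c j m` (the loop computing the max `m`
of the token numbers of conflicting processes with token color `c`; `j` is the next
index to read), `d4 s c m` (Token[i]:=(s,c,m), where `m` is the final mynumber) and
`d5 s c m` (Choosing[i]:=false).  The waiting room iterates, for each `j`:
`w1` (wait until Choosing[j]=false or Token[j].session=s), `wB` (the branch reading
Token[j].color), and the busy-waits `wSame` / `wDiff`.  The exit section is the scan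
`x1 s c m j` looking for an active process of the opposite color (entered only when
`m ≠ 1`), `xFlip s c m` (GlobalColor := opposite of `c`) and `x2` (Token[i]:=(0,⊥,0)). -/
inductive BWPc : Type
  | remainder
  | d1 (s : ℕ)
  | d2 (s : ℕ)
  | d3 (s : ℕ)
  | scan (s : ℕ) (c : Color) (j : ℕ) (m : ℕ)
  | d4 (s : ℕ) (c : Color) (m : ℕ)
  | d5 (s : ℕ) (c : Color) (m : ℕ)
  | w1 (s : ℕ) (c : Color) (m : ℕ) (j : ℕ)
  | wB (s : ℕ) (c : Color) (m : ℕ) (j : ℕ)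
  | wSame (s : ℕ) (c : Color) (m : ℕ) (j : ℕ)
  | wDiff (s : ℕ) (c : Color) (m : ℕ) (j : ℕ)
  | cs (s : ℕ) (c : Color) (m : ℕ)
  | x1 (s : ℕ) (c : Color) (m : ℕ) (j : ℕ)
  | xFlip (s : ℕ) (c : Color) (m : ℕ)
  | x2
  deriving DecidableEq

/-- Global state: GlobalColor, the shared arrays Token and Choosing, and the
control state of each process. -/
structure BWState (N : ℕ) where
  gcolor : Color
  token : Fin N → BWTok
  choosing : Fin N → Bool
  pc : Fin N → BWPc

/-- Initial state; GlobalColor is initialized arbitrarily to `c0`. -/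
def bwInit (N : ℕ) (c0 : Color) : BWState N :=
  { gcolor := c0, token := fun _ => BWTok.init, choosing := fun _ => false,
    pc := fun _ => BWPc.remainder }

/-- One atomic step of process `i` of the BWBGME algorithm. -/
def bwStep {N : ℕ} (st : BWState N) (i : Fin N) (st' : BWState N) : Prop :=
  match st.pc i with
  | .remainder =>
      st' = st ∨ ∃ s : ℕ, 0 < s ∧ st' = { st with pc := Function.update st.pc i (.d1 s) }
  | .d1 s =>
      st' = { st with token := Function.update st.token i ⟨s, none, 0⟩,
                      pc := Function.update st.pc i (.d2 s) }
  | .d2 s =>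
      st' = { st with choosing := Function.update st.choosing i true,
                      pc := Function.update st.pc i (.d3 s) }
  | .d3 s =>
      st' = { st with pc := Function.update st.pc i (.scan s st.gcolor 0 0) }
  | .scan s c j m =>
      if h : j < N then
        st' = { st with pc := Function.update st.pc i (.scan s c (j+1)
                  (if (st.token ⟨j, h⟩).color = some c ∧ (st.token ⟨j, h⟩).session ≠ 0 ∧
                      (st.token ⟨j, h⟩).session ≠ s
                   then max m (st.token ⟨j, h⟩).number else m)) }
      else
        st' = { st with pc := Function.update st.pc i (.d4 s c (m+1)) }
  | .d4 s c m =>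
      st' = { st with token := Function.update st.token i ⟨s, some c, m⟩,
                      pc := Function.update st.pc i (.d5 s c m) }
  | .d5 s c m =>
      st' = { st with choosing := Function.update st.choosing i false,
                      pc := Function.update st.pc i (.w1 s c m 0) }
  | .w1 s c m j =>
      if h : j < N then
        if st.choosing ⟨j, h⟩ = false ∨ (st.token ⟨j, h⟩).session = s then
          st' = { st with pc := Function.update st.pc i (.wB s c m j) }
        else st' = st
      else
        st' = { st with pc := Function.update st.pc i (.cs s c m) }
  | .wB s c m j =>
      if h : j < N then
        if (st.token ⟨j, h⟩).color = some c then
          st' = { st with pc := Function.update st.pc i (.wSame s c m j) }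
        else
          st' = { st with pc := Function.update st.pc i (.wDiff s c m j) }
      else st' = st
  | .wSame s c m j =>
      if h : j < N then
        if (m < (st.token ⟨j, h⟩).number ∨ (m = (st.token ⟨j, h⟩).number ∧ i.val < j)) ∨
            (st.token ⟨j, h⟩).color ≠ some c ∨ (st.token ⟨j, h⟩).session = 0 ∨
            (st.token ⟨j, h⟩).session = s then
          st' = { st with pc := Function.update st.pc i (.w1 s c m (j+1)) }
        else st' = st
      else st' = st
  | .wDiff s c m j =>
      if h : j < N then
        if st.gcolor ≠ c ∨ (st.token ⟨j, h⟩).color = some c ∨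
            (st.token ⟨j, h⟩).session = 0 ∨ (st.token ⟨j, h⟩).session = s then
          st' = { st with pc := Function.update st.pc i (.w1 s c m (j+1)) }
        else st' = st
      else st' = st
  | .cs s c m =>
      st' = st ∨
        st' = { st with pc :=
                  Function.update st.pc i (if m = 1 then BWPc.x2 else BWPc.x1 s c m 0) }
  | .x1 s c m j =>
      if h : j < N then
        if (st.token ⟨j, h⟩).session ≠ 0 ∧ (st.token ⟨j, h⟩).color = some c.opp then
          st' = { st with pc := Function.update st.pc i .x2 }
        else
          st' = { st with pc := Function.update st.pc i (.x1 s c m (j+1)) }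
      else
        st' = { st with pc := Function.update st.pc i (.xFlip s c m) }
  | .xFlip _ c _ =>
      st' = { st with gcolor := c.opp, pc := Function.update st.pc i .x2 }
  | .x2 =>
      st' = { st with token := Function.update st.token i BWTok.init,
                      pc := Function.update st.pc i .remainder }

/-- An execution of the BWBGME algorithm: an interleaving of atomic steps from an
initial state (with arbitrary GlobalColor) in which every process outside its
remainder section eventually takes its next step. -/
structure BWExec (N : ℕ) where
  state : ℕ → BWState N
  sched : ℕ → Fin N
  init : ∃ c0, state 0 = bwInit N c0
  step : ∀ n, bwStep (state n) (sched n) (state (n + 1))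
  fair : ∀ (i : Fin N) (n : ℕ), (state n).pc i ≠ BWPc.remainder →
           ∃ m, n ≤ m ∧ sched m = i

/-- Process `i` is in the critical section. -/
def bwInCS {N : ℕ} (st : BWState N) (i : Fin N) : Prop :=
  ∃ s c m, st.pc i = BWPc.cs s c m

/-- Process `i` is in the entry section (doorway or waiting room). -/
def bwInEntry {N : ℕ} (st : BWState N) (i : Fin N) : Prop :=
  match st.pc i with
  | .remainder => False
  | .cs _ _ _ => False
  | .x1 _ _ _ _ => False
  | .xFlip _ _ _ => False
  | .x2 => False
  | _ => True

/-- At step `n`, process `i` leaves the remainder and enters the doorway,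
requesting session `s`. -/
def bwEntersDoorway {N : ℕ} (e : BWExec N) (i : Fin N) (s : ℕ) (n : ℕ) : Prop :=
  (e.state n).pc i = BWPc.remainder ∧ (e.state (n+1)).pc i = BWPc.d1 s

/-- At step `n`, process `i` completes its doorway (executes Choosing[i]:=false),
having requested session `s` and chosen token color `c` and token number `m`. -/
def bwCompletesDoorway {N : ℕ} (e : BWExec N) (i : Fin N) (s : ℕ) (c : Color) (m : ℕ)
    (n : ℕ) : Prop :=
  (e.state n).pc i = BWPc.d5 s c m ∧ (e.state (n+1)).pc i = BWPc.w1 s c m 0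

/-- At step `n`, process `i` executes line 5, reading GlobalColor = `c`
(its invocation requests session `s`). -/
def bwLine5 {N : ℕ} (e : BWExec N) (i : Fin N) (s : ℕ) (c : Color) (n : ℕ) : Prop :=
  (e.state n).pc i = BWPc.d3 s ∧ (e.state (n+1)).pc i = BWPc.scan s c 0 0

/-- At step `n`, process `i` executes line 4 (Choosing[i]:=true). -/
def bwLine4 {N : ℕ} (e : BWExec N) (i : Fin N) (s : ℕ) (n : ℕ) : Prop :=
  (e.state n).pc i = BWPc.d2 s ∧ (e.state (n+1)).pc i = BWPc.d3 s

/-- At step `n`, process `i` enters the critical section. -/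
def bwEntersCS {N : ℕ} (e : BWExec N) (i : Fin N) (n : ℕ) : Prop :=
  ¬ bwInCS (e.state n) i ∧ bwInCS (e.state (n+1)) i

/-- At step `n`, process `i` finishes (leaves) the critical section. -/
def bwLeavesCS {N : ℕ} (e : BWExec N) (i : Fin N) (n : ℕ) : Prop :=
  bwInCS (e.state n) i ∧ ¬ bwInCS (e.state (n+1)) i

/-- At step `n`, process `i` completes its exit section
(executes Token[i]:=(0,⊥,0) and returns to the remainder section). -/
def bwCompletesExit {N : ℕ} (e : BWExec N) (i : Fin N) (n : ℕ) : Prop :=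
  (e.state n).pc i = BWPc.x2 ∧ (e.state (n+1)).pc i = BWPc.remainder

/-- Process `i` does not pass through the remainder section during `(a, b]`
(so times `a` and `b` belong to the same invocation of `i`). -/
def bwActiveThrough {N : ℕ} (e : BWExec N) (i : Fin N) (a b : ℕ) : Prop :=
  ∀ k, a < k → k ≤ b → (e.state k).pc i ≠ BWPc.remainder

/-- GlobalColor is flipped at step `n`: the step is a write that changes its value. -/
def bwFlipAt {N : ℕ} (e : BWExec N) (n : ℕ) : Prop :=
  (e.state (n+1)).gcolor ≠ (e.state n).gcolor

/-! ### Remote memory references in the cache-coherent (CC) model -/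

/-- The shared variables of the BWBGME algorithm. -/
inductive BWVar (N : ℕ) : Type
  | gcolor
  | token (j : Fin N)
  | choosing (j : Fin N)
  deriving DecidableEq

/-- Shared variables read by the next step of process `i` in state `st`. -/
def bwReads {N : ℕ} (st : BWState N) (i : Fin N) : Finset (BWVar N) :=
  match st.pc i with
  | .d3 _ => {BWVar.gcolor}
  | .scan _ _ j _ => if h : j < N then {BWVar.token ⟨j, h⟩} else ∅
  | .w1 _ _ _ j => if h : j < N then {BWVar.choosing ⟨j, h⟩, BWVar.token ⟨j, h⟩} else ∅
  | .wB _ _ _ j => if h : j < N then {BWVar.token ⟨j, h⟩} else ∅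
  | .wSame _ _ _ j => if h : j < N then {BWVar.token ⟨j, h⟩} else ∅
  | .wDiff _ _ _ j => if h : j < N then {BWVar.gcolor, BWVar.token ⟨j, h⟩} else ∅
  | .x1 _ _ _ j => if h : j < N then {BWVar.token ⟨j, h⟩} else ∅
  | _ => ∅

/-- Shared variables written by the next step of process `i` in state `st`. -/
def bwWrites {N : ℕ} (st : BWState N) (i : Fin N) : Finset (BWVar N) :=
  match st.pc i with
  | .d1 _ => {BWVar.token i}
  | .d2 _ => {BWVar.choosing i}
  | .d4 _ _ _ => {BWVar.token i}
  | .d5 _ _ _ => {BWVar.choosing i}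
  | .xFlip _ _ _ => {BWVar.gcolor}
  | .x2 => {BWVar.token i}
  | _ => ∅

/-- `bwCached e n p v` holds iff just before step `n`, process `p` holds a valid cached
copy of variable `v`: a copy is acquired by reading `v` and stays valid until some
process writes `v`. -/
def bwCached {N : ℕ} (e : BWExec N) : ℕ → Fin N → BWVar N → Bool
  | 0, _, _ => false
  | n + 1, p, v =>
      (bwCached e n p v || (decide (e.sched n = p) && decide (v ∈ bwReads (e.state n) p)))
        && ! decide (v ∈ bwWrites (e.state n) (e.sched n))

/-- The number of remote memory references incurred by step `n` of the execution: every
write is an RMR, and a read is an RMR iff the stepping process holds no valid cached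
copy. -/
def bwStepRMR {N : ℕ} (e : BWExec N) (n : ℕ) : ℕ :=
  (bwWrites (e.state n) (e.sched n)).card +
    ((bwReads (e.state n) (e.sched n)).filter
      (fun v => bwCached e n (e.sched n) v = false)).card

/-!
Fix a process `i`. Its references are charged to a potential that is `O(N)` and that, during an
invocation of `i`, is not increased by any step of any process. Steps that advance the program of
`i` make `O(N)` references in total, so only failed wait tests matter, and with caches these cost
something only if an awaited variable has been written since the previous test.

While `Token[i] = (s, c, m)` is published, a process of another session that starts its doorway
either reads the color `c` and then takes a number larger than `m`, or reads the opposite color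
and waits for `GlobalColor = c`. In both cases it gets stuck behind `i` after `O(1)` writes to its
own variables, unless somebody writes `GlobalColor := c`. A process does this only if its exit scan
has found no token of color `c`, so it must have passed index `i` before `Token[i]` received that
color; this happens at most once per process. Each such write costs `i` only `O(1)` further failed
tests, since `i` waits for one process at a time.
-/

theorem Color.eq_of_ne_of_ne {a b c : Color} (ha : a ≠ c) (hb : b ≠ c) : a = b := by
  cases a <;> cases b <;> cases c <;> simp_all

/-! ### Frame and invariant -/

namespace bwStep

variable {N : ℕ} {st st' : BWState N} {j k : Fin N}

theorem frame (h : bwStep st k st') (hjk : j ≠ k) :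
    st'.token j = st.token j ∧ st'.choosing j = st.choosing j ∧ st'.pc j = st.pc j := by
  unfold bwStep at h
  split at h <;> (try split_ifs at h) <;>
    (first | subst h | (rcases h with rfl | ⟨_, _, rfl⟩)) <;> simp [Function.update_of_ne hjk]

theorem token_eq (h : bwStep st k st') (hjk : j ≠ k) : st'.token j = st.token j :=
  (h.frame hjk).1

theorem pc_eq (h : bwStep st k st') (hjk : j ≠ k) : st'.pc j = st.pc j :=
  (h.frame hjk).2.2

end bwStep

/-- The invariant tying the token `t` and the choosing flag `ch` of a process to its program
counter. -/
def BWPc.Inv (t : BWTok) (ch : Bool) : BWPc → Prop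
  | .remainder => t.session = 0 ∧ ch = false
  | .d1 s => 0 < s ∧ t.session = 0 ∧ ch = false
  | .d2 s | .d3 s | .scan s _ _ _ | .d4 s _ _ => 0 < s ∧ t.session = s
  | .d5 s c m => 0 < s ∧ t = ⟨s, some c, m⟩
  | .w1 s c m _ | .wB s c m _ | .wSame s c m _ | .wDiff s c m _ | .cs s c m | .x1 s c m _
  | .xFlip s c m => 0 < s ∧ t = ⟨s, some c, m⟩ ∧ ch = false
  | .x2 => 0 < t.session ∧ ch = false

/-- The conjunction of `BWPc.Inv` over all processes. -/
def BWState.Inv {N : ℕ} (st : BWState N) : Prop :=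
  ∀ k, (st.pc k).Inv (st.token k) (st.choosing k)

section Invariant

variable {N : ℕ} {st st' : BWState N} {j k : Fin N}

theorem bwStep.pcInv (h : bwStep st k st') (hI : (st.pc k).Inv (st.token k) (st.choosing k)) :
    (st'.pc k).Inv (st'.token k) (st'.choosing k) := by
  unfold bwStep at h
  split at h <;> rename_i hpc <;> rw [hpc] at hI <;> (try split_ifs at h) <;>
    (first | subst h | (rcases h with rfl | ⟨_, _, rfl⟩)) <;>
    simp_all [BWPc.Inv, BWTok.init]

theorem bwStep.inv (h : bwStep st k st') (hI : st.Inv) : st'.Inv := by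
  intro j
  by_cases hjk : j = k
  · subst hjk
    exact h.pcInv (hI j)
  · obtain ⟨htoken, hchoosing, hpc⟩ := h.frame hjk
    rw [htoken, hchoosing, hpc]
    exact hI j

theorem BWExec.inv (e : BWExec N) (n : ℕ) : (e.state n).Inv := by
  induction n with
  | zero =>
    obtain ⟨c₀, h₀⟩ := e.init
    intro k
    simp [h₀, bwInit, BWPc.Inv, BWTok.init]
  | succ n ih => exact (e.step n).inv ih

theorem BWState.Inv.session_ne_zero_of_choosing (hI : st.Inv) (h : st.choosing j = true) :
    (st.token j).session ≠ 0 := by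
  have hj := hI j
  cases hpc : st.pc j <;> simp_all [BWPc.Inv] <;> omega

theorem BWState.Inv.pc_of_session_eq_zero (hI : st.Inv) (h : (st.token j).session = 0) :
    st.pc j = .remainder ∨ ∃ s, st.pc j = .d1 s := by
  have hj := hI j
  cases hpc : st.pc j <;> simp_all [BWPc.Inv] <;> omega

theorem bwStep.session_eq_or_exit (h : bwStep st k st') (hI : st.Inv)
    (hj : (st.token j).session ≠ 0) :
    (st'.token j).session = (st.token j).session ∨
      st.pc j = .x2 ∧ (st'.token j).session = 0 := by
  by_cases hjk : j = k
  · subst hjk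
    have hinv := hI j
    unfold bwStep at h
    split at h <;> (try split_ifs at h) <;>
      (first | subst h | (rcases h with rfl | ⟨_, _, rfl⟩)) <;>
      simp_all [BWPc.Inv, BWTok.init]
  · exact .inl (congrArg BWTok.session (h.token_eq hjk))

end Invariant

/-! ### Caches -/

/-- The variables that only process `j` writes. -/
def BWVar.ownedBy {N : ℕ} (j : Fin N) : Finset (BWVar N) := {.choosing j, .token j}

/-- The cache of one process: which shared variables it holds a valid copy of. -/
abbrev BWCache (N : ℕ) := BWVar N → Bool

namespace BWCache

variable {N : ℕ} (C : BWCache N) (st : BWState N) (i k : Fin N)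

/-- The remote references, 0 or 1, incurred by a read of `v`. -/
def readCost (v : BWVar N) : ℕ := if C v = false then 1 else 0

/-- The cache of process `i` after a step of process `k` from state `st`: the recursion
behind `bwCached`. -/
def next : BWCache N := fun v =>
  (C v || (decide (k = i) && decide (v ∈ bwReads st k))) && !decide (v ∈ bwWrites st k)

/-- The remote references incurred by a step of process `i` with cache `C`. -/
def stepCost : ℕ := (bwWrites st i).card + ∑ v ∈ bwReads st i, C.readCost v

theorem readCost_le_one (v : BWVar N) : C.readCost v ≤ 1 := by
  unfold readCost
  split_ifs <;> omega

theorem sum_ownedBy_readCost_le (j : Fin N) : ∑ v ∈ BWVar.ownedBy j, C.readCost v ≤ 2 :=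
  (Finset.sum_le_card_nsmul _ _ 1 fun v _ => C.readCost_le_one v).trans
    (by simp [BWVar.ownedBy])

theorem readCost_next_le (v : BWVar N) :
    (C.next st i k).readCost v ≤ C.readCost v + if v ∈ bwWrites st k then 1 else 0 := by
  unfold readCost next
  grind

theorem readCost_next_add_le {v : BWVar N} (hw : v ∉ bwWrites st i) :
    (C.next st i i).readCost v + (if v ∈ bwReads st i then C.readCost v else 0) ≤
      C.readCost v := by
  unfold readCost next
  grind

theorem sum_readCost_next_le (V : Finset (BWVar N)) :
    ∑ v ∈ V, (C.next st i k).readCost v ≤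
      ∑ v ∈ V, C.readCost v + (V ∩ bwWrites st k).card := by
  rw [← Finset.filter_mem_eq_inter, Finset.card_filter, ← Finset.sum_add_distrib]
  exact Finset.sum_le_sum fun v _ => C.readCost_next_le st i k v

theorem sum_readCost_next_add_le {V : Finset (BWVar N)} (hw : bwWrites st i = ∅)
    (hV : bwReads st i ⊆ V) :
    ∑ v ∈ V, (C.next st i i).readCost v + C.stepCost st i ≤ ∑ v ∈ V, C.readCost v := by
  have hreads : ∑ v ∈ bwReads st i, C.readCost v =
      ∑ v ∈ V, if v ∈ bwReads st i then C.readCost v else 0 := by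
    rw [Finset.sum_ite_mem, Finset.inter_eq_right.mpr hV]
  rw [stepCost, hw, Finset.card_empty, zero_add, hreads, ← Finset.sum_add_distrib]
  exact Finset.sum_le_sum fun v _ => C.readCost_next_add_le st i (by simp [hw])

theorem stepCost_le_card : C.stepCost st i ≤ (bwWrites st i).card + (bwReads st i).card := by
  rw [stepCost, Finset.card_eq_sum_ones (bwReads st i)]
  gcongr
  exact C.readCost_le_one _

theorem stepCost_le : C.stepCost st i ≤ 2 := by
  refine (C.stepCost_le_card st i).trans ?_
  unfold bwReads bwWrites
  cases st.pc i <;> dsimp only <;> (try split_ifs) <;> simp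

end BWCache

/-! ### Writes to `GlobalColor` -/

namespace BWPc

/-- The next step of a process at this program counter writes `GlobalColor := c`. -/
def Flips (c : Color) : BWPc → Prop
  | .xFlip _ c' _ => c'.opp = c
  | _ => False

/-- A process at this program counter may still write `GlobalColor := c` in its current
invocation although process `i` holds a token of color `c`: its exit scan has passed index
`i`. -/
def MayFlip (i : ℕ) (c : Color) : BWPc → Prop
  | .x1 _ c' _ j => c'.opp = c ∧ i < j
  | .xFlip _ c' _ => c'.opp = c
  | _ => False

instance (c : Color) : DecidablePred (Flips c) := fun p => by
  cases p <;> unfold Flips <;> infer_instance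

instance (i : ℕ) (c : Color) : DecidablePred (MayFlip i c) := fun p => by
  cases p <;> unfold MayFlip <;> infer_instance

theorem Flips.mayFlip {i : ℕ} {c : Color} {p : BWPc} (h : p.Flips c) : p.MayFlip i c := by
  cases p <;> first | exact h | exact h.elim

end BWPc

namespace BWState

variable {N : ℕ} (st : BWState N) (i : Fin N) (c : Color)

/-- The processes that may still write `GlobalColor := c` while process `i` holds a token of
color `c`. -/
def flippers : Finset (Fin N) := {k | (st.pc k).MayFlip i c}

/-- The remote reference that process `i`, waiting for `GlobalColor ≠ c` with cache `C`, is about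
to incur on a read of `GlobalColor` that does not end its wait. -/
def colorCredit (C : BWCache N) : ℕ := if st.gcolor = c then C.readCost .gcolor else 0

theorem card_flippers_le : (st.flippers i c).card ≤ N :=
  (Finset.card_le_univ _).trans (by simp)

theorem colorCredit_le_one (C : BWCache N) : st.colorCredit c C ≤ 1 := by
  unfold colorCredit
  split_ifs
  exacts [C.readCost_le_one _, zero_le_one]

end BWState

namespace bwStep

variable {N : ℕ} {st st' : BWState N} {i k : Fin N} {c : Color}

theorem mayFlip_of_mayFlip (h : bwStep st k st') (hs : (st.token i).session ≠ 0)
    (hc : (st.token i).color = some c) (hk : (st'.pc k).MayFlip i c) :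
    (st.pc k).MayFlip i c ∧ ¬ (st.pc k).Flips c := by
  unfold bwStep at h
  split at h <;> rename_i hpc <;> (try split_ifs at h) <;>
    (first | subst h | (rcases h with rfl | ⟨_, _, rfl⟩)) <;>
    simp only [BWPc.MayFlip, BWPc.Flips, Function.update_self, hpc] at hk ⊢ <;> grind

theorem card_flippers_add_le (h : bwStep st k st') (hs : (st.token i).session ≠ 0)
    (hc : (st.token i).color = some c) :
    (st'.flippers i c).card + (if (st.pc k).Flips c then 1 else 0) ≤ (st.flippers i c).card := by
  have hsub : st'.flippers i c ⊆ st.flippers i c := by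
    refine Finset.monotone_filter_right _ fun j _ hj => ?_
    by_cases hjk : j = k
    · subst hjk
      exact (h.mayFlip_of_mayFlip hs hc hj).1
    · rwa [h.pc_eq hjk] at hj
  split_ifs with hflip
  · refine Finset.card_lt_card ((Finset.ssubset_iff_of_subset hsub).mpr ⟨k, ?_, fun hk => ?_⟩)
    · simpa [BWState.flippers] using hflip.mayFlip
    · exact (h.mayFlip_of_mayFlip hs hc (Finset.mem_filter.mp hk).2).2 hflip
  · exact Finset.card_le_card hsub

theorem gcolor_of_not_flips (h : bwStep st k st') (hflip : ¬ (st.pc k).Flips c)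
    (hc : st'.gcolor = c) : st.gcolor = c ∧ .gcolor ∉ bwWrites st k := by
  unfold bwStep at h
  split at h <;> rename_i hpc <;> (try split_ifs at h) <;>
    (first | subst h | (rcases h with rfl | ⟨_, _, rfl⟩)) <;>
    simp_all [BWPc.Flips, bwWrites]

theorem colorCredit_le (h : bwStep st k st') (C : BWCache N) :
    st'.colorCredit c (C.next st i k) ≤
      st.colorCredit c C + if (st.pc k).Flips c then 1 else 0 := by
  by_cases hflip : (st.pc k).Flips c
  · rw [if_pos hflip]
    exact (st'.colorCredit_le_one c _).trans (Nat.le_add_left _ _)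
  · unfold BWState.colorCredit
    by_cases hc : st'.gcolor = c
    · obtain ⟨hc', hw⟩ := h.gcolor_of_not_flips hflip hc
      simpa [hc, hc', hflip, hw] using C.readCost_next_le st i k .gcolor
    · simp [hc]

end bwStep

/-! ### Processes held back by a waiting process -/

namespace BWPc

/-- A process with color `c'` and number `m'` cannot overtake a process with color `c` and
number `m` while `GlobalColor = g`. -/
def Behind (c : Color) (m : ℕ) (g c' : Color) (m' : ℕ) : Prop :=
  (c' = c → m < m') ∧ (c' ≠ c → g ≠ c)

/-- A process at this program counter that requests another session than process `i` cannot
reach its critical section as long as `Token[i]` is `(s, c, m)` and nobody writes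
`GlobalColor := c`; `g` is the current value of `GlobalColor`. -/
def Held (i : ℕ) (c : Color) (m : ℕ) (g : Color) : BWPc → Prop
  | .d2 _ | .d3 _ => True
  | .scan _ c' j m' => (c' = c → j ≤ i ∨ m ≤ m') ∧ (c' ≠ c → g ≠ c)
  | .d4 _ c' m' | .d5 _ c' m' => Behind c m g c' m'
  | .w1 _ c' m' j | .wB _ c' m' j => Behind c m g c' m' ∧ j ≤ i
  | .wSame _ c' m' j => Behind c m g c' m' ∧ j ≤ i ∧ (j = i → c' = c)
  | .wDiff _ c' m' j => Behind c m g c' m' ∧ j ≤ i ∧ (j = i → c' ≠ c)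
  | _ => False

instance (i : ℕ) (c : Color) (m : ℕ) (g : Color) : DecidablePred (Held i c m g) := fun p => by
  cases p <;> unfold Held <;> (try unfold Behind) <;> infer_instance

/-- The number of writes to its own variables that a process still performs in the doorway. -/
def doorwayWrites : BWPc → ℕ
  | .d2 _ => 3
  | .d3 _ | .scan _ _ _ _ | .d4 _ _ _ => 2
  | .d5 _ _ _ => 1
  | _ => 0

theorem Held.of_gcolor {i : ℕ} {c : Color} {m : ℕ} {g g' : Color} {p : BWPc}
    (h : p.Held i c m g) (hg : g' = c → g = c) : p.Held i c m g' := by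
  cases p <;> simp only [Held, Behind] at h ⊢ <;> grind

theorem doorwayWrites_add_le (i : ℕ) (c : Color) (m : ℕ) (g : Color) (p : BWPc) :
    p.doorwayWrites + (if p.Held i c m g then 0 else 5) ≤ 7 := by
  split_ifs with hheld <;> cases p <;> simp_all [doorwayWrites, Held]

end BWPc

namespace bwStep

variable {N : ℕ} {st st' : BWState N} {i j k : Fin N} {s : ℕ} {c : Color} {m : ℕ}

theorem held_self (h : bwStep st j st') (hI : st.Inv) (hs : s ≠ 0)
    (hi : st.token i = ⟨s, some c, m⟩) (hj : (st.token j).session ≠ s)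
    (hheld : (st.pc j).Held i c m st.gcolor) : (st'.pc j).Held i c m st'.gcolor := by
  have hiN := i.isLt
  have hinv := hI j
  cases hpc : st.pc j with
  | d2 | d3 | d4 | d5 =>
    simp only [bwStep, hpc] at h
    subst h
    simp_all [BWPc.Held, BWPc.Behind]
  | scan s' c' l m' =>
    simp only [bwStep, hpc] at h
    -- When `j` reads `Token[i]`, its maximum becomes at least `m`.
    simp only [hpc, BWPc.Held, BWPc.Inv] at hheld hinv
    split_ifs at h <;> subst h <;>
      simp only [Function.update_self, BWPc.Held, BWPc.Behind] <;> grind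
  | w1 s' c' m' l | wB s' c' m' l | wSame s' c' m' l =>
    simp only [bwStep, hpc] at h
    -- Process `j` does not pass index `i`: with color `c` its number exceeds `m`.
    simp only [hpc, BWPc.Held, BWPc.Behind, BWPc.Inv] at hheld hinv
    split_ifs at h <;> subst h <;>
      simp only [Function.update_self, BWPc.Held, BWPc.Behind, hpc] <;> grind
  | wDiff s' c' m' l =>
    simp only [bwStep, hpc] at h
    simp only [hpc, BWPc.Held, BWPc.Behind, BWPc.Inv] at hheld hinv
    -- A process of the other color waits for `GlobalColor` to leave that color.
    have hcolor : c' ≠ c → st.gcolor = c' := fun hc => Color.eq_of_ne_of_ne (hheld.1.2 hc) hc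
    split_ifs at h <;> subst h <;>
      simp only [Function.update_self, BWPc.Held, BWPc.Behind, hpc] <;> grind
  | _ => simp [hpc, BWPc.Held] at hheld

theorem held_of_not_flips (h : bwStep st k st') (hI : st.Inv) (hs : s ≠ 0)
    (hi : st.token i = ⟨s, some c, m⟩) (hj : (st.token j).session ≠ s)
    (hflip : ¬ (st.pc k).Flips c) (hheld : (st.pc j).Held i c m st.gcolor) :
    (st'.pc j).Held i c m st'.gcolor := by
  by_cases hjk : j = k
  · subst hjk
    exact h.held_self hI hs hi hj hheld
  · rw [h.pc_eq hjk]
    exact hheld.of_gcolor fun hc => (h.gcolor_of_not_flips hflip hc).1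

theorem card_ownedBy_inter_writes_add_le (h : bwStep st k st') (hI : st.Inv)
    (hj : (st.token j).session ≠ 0) (hsession : (st'.token j).session = (st.token j).session) :
    (BWVar.ownedBy j ∩ bwWrites st k).card + (st'.pc j).doorwayWrites ≤
      (st.pc j).doorwayWrites := by
  by_cases hjk : j = k
  · subst hjk
    have hinv := hI j
    unfold bwStep at h
    split at h <;> (try split_ifs at h) <;>
      (first | subst h | (rcases h with rfl | ⟨_, _, rfl⟩)) <;>
      simp_all [BWPc.Inv, bwWrites, BWPc.doorwayWrites, BWVar.ownedBy, BWTok.init]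
  · have hdisj : BWVar.ownedBy j ∩ bwWrites st k = ∅ := by
      unfold bwWrites BWVar.ownedBy
      cases st.pc k <;> simp [Ne.symm hjk]
    rw [hdisj, h.pc_eq hjk, Finset.card_empty, zero_add]

end bwStep

/-! ### Spin credit -/

namespace BWState

variable {N : ℕ} (st : BWState N) (C : BWCache N) (i : Fin N) (s : ℕ) (c : Color) (m : ℕ)

/-- Bounds the references to the variables of process `j` that process `i`, with token
`(s, c, m)` and cache `C`, makes in failed wait tests on `j` as long as nobody writes
`GlobalColor := c`. The constant 5 pays for a conflicting doorway that `j` has yet to start: 2 for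
its two variables and 3 for the writes counted by `doorwayWrites`. -/
def peerCredit (j : Fin N) : ℕ :=
  if (st.token j).session = 0 ∨ (st.token j).session = s then 5
  else ∑ v ∈ BWVar.ownedBy j, C.readCost v + (st.pc j).doorwayWrites +
    if (st.pc j).Held i c m st.gcolor then 0 else 5

/-- Bounds the references in failed wait tests that process `i`, with token `(s, c, m)` and
cache `C`, makes from the iteration `j` of its waiting room on. Each of the remaining writes of
`GlobalColor := c` may release the process `i` is waiting for, which costs 5, and invalidates
the copy of `GlobalColor`, which costs 1. -/
def waitCredit (j : ℕ) : ℕ :=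
  (if h : j < N then st.peerCredit C i s c m ⟨j, h⟩ else 0) + 9 * (N - (j + 1)) +
    6 * (st.flippers i c).card + st.colorCredit c C

/-- Bounds the references in failed wait tests that process `i`, with cache `C`, makes in
the rest of its invocation. -/
def spinCredit : ℕ :=
  match st.pc i with
  | .d1 _ | .d2 _ | .d3 _ | .scan _ _ _ _ | .d4 _ _ _ | .d5 _ _ _ => 15 * N + 1
  | .w1 s c m j | .wB s c m j | .wSame s c m j | .wDiff s c m j => st.waitCredit C i s c m j
  | _ => 0

variable {st C i s c m}

theorem peerCredit_le (j : Fin N) : st.peerCredit C i s c m j ≤ 9 := by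
  have hread := C.sum_ownedBy_readCost_le j
  have hdoor := (st.pc j).doorwayWrites_add_le i c m st.gcolor
  unfold peerCredit
  split_ifs at hdoor ⊢ <;> omega

theorem waitCredit_le (j : ℕ) : st.waitCredit C i s c m j ≤ 9 * (N - j) + 6 * N + 1 := by
  have hflippers := st.card_flippers_le i c
  have hcolor := st.colorCredit_le_one c C
  unfold waitCredit
  split_ifs with hj
  · have := st.peerCredit_le (C := C) (i := i) (s := s) (c := c) (m := m) ⟨j, hj⟩
    omega
  · omega

theorem waitCredit_succ_le {j : ℕ} (hj : j < N) :
    st.waitCredit C i s c m (j + 1) ≤ st.waitCredit C i s c m j := by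
  unfold waitCredit
  split_ifs with hj'
  · have := st.peerCredit_le (C := C) (i := i) (s := s) (c := c) (m := m) ⟨j + 1, hj'⟩
    omega
  · omega

end BWState

namespace bwStep

variable {N : ℕ} {st st' : BWState N} {i j k : Fin N} {s : ℕ} {c : Color} {m : ℕ}

theorem pc_eq_d2_of_session_ne_zero (h : bwStep st k st') (hI : st.Inv)
    (hj : (st.token j).session = 0) (hj' : (st'.token j).session ≠ 0) :
    ∃ s, st'.pc j = .d2 s := by
  by_cases hjk : j = k
  · subst hjk
    rcases hI.pc_of_session_eq_zero hj with hpc | ⟨s, hpc⟩ <;> simp only [bwStep, hpc] at h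
    · rcases h with rfl | ⟨_, _, rfl⟩ <;> exact absurd hj hj'
    · exact ⟨s, by simp [h]⟩
  · exact absurd (h.token_eq hjk ▸ hj) hj'

theorem peerCredit_le_five (h : bwStep st k st') (hI : st.Inv) (C : BWCache N)
    (hidle : (st.token j).session = 0 ∨ (st.token j).session = s) :
    st'.peerCredit C i s c m j ≤ 5 := by
  by_cases hidle' : (st'.token j).session = 0 ∨ (st'.token j).session = s
  · simp [BWState.peerCredit, hidle']
  · have hj₀ := (not_or.mp hidle').1
    have hj : (st.token j).session = 0 := by
      by_contra hne
      rcases h.session_eq_or_exit hI hne with hsession | ⟨-, hsession⟩ <;> grind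
    obtain ⟨s', hpc⟩ := h.pc_eq_d2_of_session_ne_zero hI hj hj₀
    have hread := C.sum_ownedBy_readCost_le j
    simp only [BWState.peerCredit, hidle', hpc, BWPc.Held, BWPc.doorwayWrites, if_true, if_false]
    omega

theorem peerCredit_le_of_conflict (h : bwStep st k st') (hI : st.Inv) (C : BWCache N)
    (hs : s ≠ 0) (hi : st.token i = ⟨s, some c, m⟩)
    (hj₀ : (st.token j).session ≠ 0) (hj : (st.token j).session ≠ s) :
    st'.peerCredit (C.next st i k) i s c m j ≤
      st.peerCredit C i s c m j + if (st.pc k).Flips c then 5 else 0 := by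
  rcases h.session_eq_or_exit hI hj₀ with hsession | ⟨hx2, hsession⟩
  · have hread := C.sum_readCost_next_le st i k (BWVar.ownedBy j)
    have hwrites := h.card_ownedBy_inter_writes_add_le hI hj₀ hsession
    have hheld := h.held_of_not_flips hI hs hi hj
    simp only [BWState.peerCredit, hsession, hj₀, hj, or_self, if_false]
    split_ifs <;> first | omega | tauto
  · simp only [BWState.peerCredit, hsession, hj₀, hj, hx2, BWPc.Held, true_or, if_true, or_self,
      if_false]
    omega

theorem peerCredit_le (h : bwStep st k st') (hI : st.Inv) (C : BWCache N) (hs : s ≠ 0)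
    (hi : st.token i = ⟨s, some c, m⟩) (j : Fin N) :
    st'.peerCredit (C.next st i k) i s c m j ≤
      st.peerCredit C i s c m j + if (st.pc k).Flips c then 5 else 0 := by
  by_cases hidle : (st.token j).session = 0 ∨ (st.token j).session = s
  · have hfive : st.peerCredit C i s c m j = 5 := if_pos hidle
    exact (h.peerCredit_le_five hI _ hidle).trans (hfive ▸ Nat.le_add_right _ _)
  · exact h.peerCredit_le_of_conflict hI C hs hi (not_or.mp hidle).1 (not_or.mp hidle).2

theorem waitCredit_le (h : bwStep st k st') (hI : st.Inv) (C : BWCache N) (hs : s ≠ 0)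
    (hi : st.token i = ⟨s, some c, m⟩) (j : ℕ) :
    st'.waitCredit (C.next st i k) i s c m j ≤ st.waitCredit C i s c m j := by
  have hflippers := h.card_flippers_add_le (i := i) (c := c) (by simpa [hi]) (by rw [hi])
  have hcolor := h.colorCredit_le (i := i) (c := c) C
  unfold BWState.waitCredit
  split_ifs with hj
  · have hpeer := h.peerCredit_le hI C hs hi ⟨j, hj⟩
    split_ifs at hflippers hcolor hpeer <;> omega
  · split_ifs at hflippers hcolor <;> omega

end bwStep

section Spin

variable {N : ℕ} {st st' : BWState N} {i k : Fin N} {s : ℕ} {c : Color} {m : ℕ}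

theorem bwStep.spinCredit_le_of_ne (h : bwStep st k st') (hI : st.Inv) (C : BWCache N)
    (hik : i ≠ k) : st'.spinCredit (C.next st i k) i ≤ st.spinCredit C i := by
  have hinv := hI i
  unfold BWState.spinCredit
  rw [h.pc_eq hik]
  split <;> rename_i hpc <;> (try exact le_rfl) <;> simp only [hpc, BWPc.Inv] at hinv <;>
    exact h.waitCredit_le hI C hinv.1.ne' hinv.2.1 _

theorem bwStep.spinCredit_le_self (h : bwStep st i st') (hI : st.Inv) (C : BWCache N)
    (hpc₀ : st.pc i ≠ .remainder) :
    st'.spinCredit (C.next st i i) i ≤ st.spinCredit C i := by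
  have hinv := hI i
  have hstep := h
  cases hpc : st.pc i with
  | remainder => exact absurd hpc hpc₀
  | d5 s c m =>
    simp only [bwStep, hpc] at h
    have hwait := st'.waitCredit_le (C := C.next st i i) (i := i) (s := s) (c := c) (m := m) 0
    simp only [BWState.spinCredit, hpc, show st'.pc i = .w1 s c m 0 by simp [h]]
    omega
  | w1 s c m j | wB s c m j | wSame s c m j | wDiff s c m j =>
    simp only [hpc, BWPc.Inv] at hinv
    have hwait := hstep.waitCredit_le hI C hinv.1.ne' hinv.2.1 j
    simp only [bwStep, hpc] at h
    split_ifs at h <;> subst h <;>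
      simp only [BWState.spinCredit, Function.update_self, hpc, zero_le] <;>
      first | exact hwait | exact (BWState.waitCredit_succ_le ‹j < N›).trans hwait
  | _ =>
    simp only [bwStep, hpc] at h
    (try split_ifs at h) <;> (first | subst h | (rcases h with rfl | rfl)) <;>
      simp [BWState.spinCredit, hpc]

theorem bwStep.spinCredit_le (h : bwStep st k st') (hI : st.Inv) (C : BWCache N)
    (hpc : st.pc i ≠ .remainder) :
    st'.spinCredit (C.next st i k) i ≤ st.spinCredit C i := by
  by_cases hik : i = k
  · subst hik
    exact h.spinCredit_le_self hI C hpc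
  · exact h.spinCredit_le_of_ne hI C hik

/-- The failed test is charged to the peer credit of `j`, together with the color credit if it
reads `GlobalColor`. -/
theorem BWState.stepCost_add_waitCredit_le {C : BWCache N} {j : ℕ} (hj : j < N)
    (hw : bwWrites st i = ∅)
    (hconflict : (st.token ⟨j, hj⟩).session ≠ 0 ∧ (st.token ⟨j, hj⟩).session ≠ s)
    (hreads : bwReads st i ⊆ insert .gcolor (BWVar.ownedBy ⟨j, hj⟩))
    (hcolor : .gcolor ∈ bwReads st i → st.gcolor = c) :
    C.stepCost st i + st.waitCredit (C.next st i i) i s c m j ≤ st.waitCredit C i s c m j := by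
  simp only [waitCredit, peerCredit, colorCredit, hj, hconflict, dite_true, or_self, if_false]
  by_cases hc : st.gcolor = c
  · have hread := C.sum_readCost_next_add_le st i hw hreads
    have hnot : .gcolor ∉ BWVar.ownedBy (⟨j, hj⟩ : Fin N) := by simp [BWVar.ownedBy]
    rw [Finset.sum_insert hnot, Finset.sum_insert hnot] at hread
    simp only [hc, if_true]
    omega
  · have hread := C.sum_readCost_next_add_le st i hw
      ((Finset.subset_insert_iff_of_notMem (mt hcolor hc)).mp hreads)
    simp only [hc, if_false]
    omega

theorem bwStep.stepCost_add_spinCredit_le (h : bwStep st i st) (hI : st.Inv) (C : BWCache N) :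
    C.stepCost st i + st.spinCredit (C.next st i i) i ≤ st.spinCredit C i := by
  cases hpc : st.pc i with
  | remainder | cs => simp [BWCache.stepCost, BWState.spinCredit, bwReads, bwWrites, hpc]
  | w1 s c m j | wB s c m j | wSame s c m j | wDiff s c m j =>
    have hwrites : bwWrites st i = ∅ := by simp [bwWrites, hpc]
    by_cases hj : j < N
    · obtain ⟨hconflict, hreads, hcolor⟩ :
          ((st.token ⟨j, hj⟩).session ≠ 0 ∧ (st.token ⟨j, hj⟩).session ≠ s) ∧
            bwReads st i ⊆ insert .gcolor (BWVar.ownedBy ⟨j, hj⟩) ∧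
            (.gcolor ∈ bwReads st i → st.gcolor = c) := by
        have hchoosing := hI.session_ne_zero_of_choosing (j := ⟨j, hj⟩)
        simp only [bwStep, hpc, hj, dite_true] at h
        split_ifs at h
        all_goals first
          | simpa [hpc] using congrArg (BWState.pc · i) h
          | simp_all [bwReads, BWVar.ownedBy]
      simpa only [BWState.spinCredit, hpc] using
        BWState.stepCost_add_waitCredit_le hj hwrites hconflict hreads hcolor
    · have hreads : bwReads st i = ∅ := by simp [bwReads, hpc, hj]
      have hnext : C.next st i i = C := by ext; simp [BWCache.next, hreads, hwrites]
      simp [BWCache.stepCost, hreads, hwrites, hnext]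
  | _ =>
    simp only [bwStep, hpc] at h
    (try split_ifs at h) <;>
      simpa [hpc] using congrArg (BWState.pc · i) h

end Spin

/-! ### The amortized cost of an invocation -/

/-- The number of references, failed wait tests not counted, that a process among `N` processes
still makes in its current invocation. -/
def BWPc.pathCost (N : ℕ) : BWPc → ℕ
  | .remainder => 0
  | .x2 => 1
  | .xFlip _ _ _ => 2
  | .x1 _ _ _ j => (N - j) + 2
  | .cs _ _ _ => N + 2
  | .wSame _ _ _ j | .wDiff _ _ _ j => 2 + 5 * (N - (j + 1)) + (N + 2)
  | .wB _ _ _ j => 3 + 5 * (N - (j + 1)) + (N + 2)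
  | .w1 _ _ _ j => 5 * (N - j) + (N + 2)
  | .d5 _ _ _ => 6 * N + 3
  | .d4 _ _ _ => 6 * N + 4
  | .scan _ _ j _ => (N - j) + (6 * N + 4)
  | .d3 _ => 7 * N + 5
  | .d2 _ => 7 * N + 6
  | .d1 _ => 7 * N + 7

theorem bwStep.stepCost_add_pathCost_le {N : ℕ} {st st' : BWState N} {i : Fin N}
    (h : bwStep st i st') (hne : st' ≠ st) (hpc₀ : st.pc i ≠ .remainder) (C : BWCache N) :
    C.stepCost st i + (st'.pc i).pathCost N ≤ (st.pc i).pathCost N := by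
  refine (Nat.add_le_add_right (C.stepCost_le_card st i) _).trans ?_
  unfold bwStep at h
  split at h <;> rename_i hpc <;> (try split_ifs at h) <;>
    (first | exact absurd h hne | exact absurd hpc hpc₀ | subst h |
      obtain rfl := h.resolve_left hne) <;>
    simp [BWPc.pathCost, bwReads, bwWrites, *] <;> omega

namespace BWState

variable {N : ℕ} (st : BWState N) (C : BWCache N) (i : Fin N)

/-- The potential of the amortized analysis: it bounds the references that process `i`, with
cache `C`, still makes in its current invocation. -/
def credit : ℕ := (st.pc i).pathCost N + st.spinCredit C i

theorem credit_le : st.credit C i ≤ 22 * N + 8 := by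
  have hwait := fun s c m j => st.waitCredit_le (C := C) (i := i) (s := s) (c := c) (m := m) j
  unfold credit spinCredit
  cases hpc : st.pc i with
  | w1 s c m j | wB s c m j | wSame s c m j | wDiff s c m j =>
    have := hwait s c m j
    simp only [BWPc.pathCost]
    omega
  | _ => simp only [BWPc.pathCost]; omega

end BWState

theorem bwStep.stepCost_add_credit_le {N : ℕ} {st st' : BWState N} {i k : Fin N}
    (h : bwStep st k st') (hI : st.Inv) (C : BWCache N) (hpc : st.pc i ≠ .remainder) :
    (if k = i then C.stepCost st i else 0) + st'.credit (C.next st i k) i ≤ st.credit C i := by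
  unfold BWState.credit
  split_ifs with hk
  · subst hk
    by_cases hst : st' = st
    · subst hst
      have := h.stepCost_add_spinCredit_le hI C
      omega
    · have hpath := h.stepCost_add_pathCost_le hst hpc C
      have hspin := h.spinCredit_le hI C hpc
      omega
  · have hspin := h.spinCredit_le hI C hpc
    rw [h.pc_eq (Ne.symm hk)]
    omega

namespace BWExec

variable {N : ℕ} (e : BWExec N) (i : Fin N)

theorem bwCached_succ (n : ℕ) :
    bwCached e (n + 1) i = BWCache.next (bwCached e n i) (e.state n) i (e.sched n) := by
  funext v
  by_cases h : e.sched n = i <;> simp [bwCached, BWCache.next, h]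

theorem bwStepRMR_eq_stepCost (n : ℕ) :
    bwStepRMR e n = BWCache.stepCost (bwCached e n (e.sched n)) (e.state n) (e.sched n) := by
  simp only [bwStepRMR, BWCache.stepCost, BWCache.readCost, Finset.card_filter]

theorem rmr_le_two (n : ℕ) : (if e.sched n = i then bwStepRMR e n else 0) ≤ 2 := by
  split_ifs
  · exact e.bwStepRMR_eq_stepCost n ▸ BWCache.stepCost_le _ _ _
  · exact zero_le

theorem rmr_add_credit_le {n : ℕ} (h : (e.state n).pc i ≠ .remainder) :
    (if e.sched n = i then bwStepRMR e n else 0) +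
        (e.state (n + 1)).credit (bwCached e (n + 1) i) i ≤
      (e.state n).credit (bwCached e n i) i := by
  have hrmr : (if e.sched n = i then bwStepRMR e n else 0) =
      if e.sched n = i then BWCache.stepCost (bwCached e n i) (e.state n) i else 0 := by
    split_ifs with hi
    · rw [bwStepRMR_eq_stepCost, hi]
    · rfl
  rw [hrmr, bwCached_succ]
  exact (e.step n).stepCost_add_credit_le (e.inv n) _ h

theorem sum_rmr_add_credit_le {a n : ℕ} (han : a ≤ n)
    (h : ∀ k, a ≤ k → k < n → (e.state k).pc i ≠ .remainder) :
    (∑ k ∈ Finset.Ico a n, if e.sched k = i then bwStepRMR e k else 0) +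
        (e.state n).credit (bwCached e n i) i ≤
      (e.state a).credit (bwCached e a i) i := by
  induction n, han using Nat.le_induction with
  | base => simp
  | succ n han ih =>
    rw [Finset.sum_Ico_succ_top han, add_assoc]
    calc _ ≤ _ + (e.state n).credit (bwCached e n i) i := by
          gcongr
          exact e.rmr_add_credit_le i (h n han n.lt_succ_self)
      _ ≤ _ := ih fun k hak hkn => h k hak (hkn.trans n.lt_succ_self)

end BWExec

theorem bw_rmr_linear_general {N : ℕ} (e : BWExec N) (i : Fin N) {a b : ℕ}
    (h : bwActiveThrough e i a b) :
    (∑ k ∈ Finset.Icc a b, if e.sched k = i then bwStepRMR e k else 0) ≤ 32 * N := by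
  have hN := i.pos
  rcases lt_or_ge b a with hba | hab
  · simp [Finset.Icc_eq_empty_of_lt hba]
  · have hfirst := e.rmr_le_two i a
    have hrest := e.sum_rmr_add_credit_le i (Nat.add_le_add_right hab 1)
      fun k hak hkb => h k hak (Nat.le_of_lt_succ hkb)
    have hcredit := (e.state (a + 1)).credit_le (bwCached e (a + 1) i) i
    rw [← Finset.Ico_add_one_right_eq_Icc, Finset.sum_eq_sum_Ico_succ_bot (by omega)]
    omega

/-- **O(N) RMR complexity of the BWBGME algorithm in the CC model.**  There is a constant
`c` such that in every execution with any number `N` of processes, every single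
invocation by a process `i` — entered at step `a` (leaving the remainder section) and
completed at step `b` (returning to the remainder section), staying outside the remainder
section in between — incurs at most `c * N` remote memory references. -/
theorem bw_rmr_linear :
    ∃ c : ℕ, ∀ (N : ℕ) (e : BWExec N) (i : Fin N) (a b : ℕ),
      (e.state a).pc i = BWPc.remainder →
      (e.state (a + 1)).pc i ≠ BWPc.remainder →
      bwCompletesExit e i b →
      a < b →
      bwActiveThrough e i a b →
      (∑ k ∈ Finset.Icc a b, if e.sched k = i then bwStepRMR e k else 0) ≤ c * N := by
  exact ⟨32, fun _ e i _ _ _ _ _ _ h => bw_rmr_linear_general e i h⟩
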